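/- Let p ≥ 5 and 2 ≤ r ≤ p−3 be integers, k ∈ ℕ₀, and 0 = τ₀ < τ₁ < ⋯ < τ_k < τ_{k+1} = 1. Let α^(L), α^(R), β^(L), β^(R) : ℝ → ℝ be polynomial functions of degree at most 1 with α^(L)(v)·α^(R)(v) < 0 for all v ∈ [0,1]; set β = α^(L)β^(R) − α^(R)β^(L), let q be the monic greatest common divisor of α^(L) and α^(R), α̃^(S) = α^(S)/q, and z_β = #{ i ∈ {1,…,k} : β(τ_i) = 0 }. Define Γ₀ as the set of twice differentiable functions g̃₀ : [0,1] → ℝ for which there exist a differentiable function g̃₁ : [0,1] → ℝ and a function g̃₂ : [0,1] → ℝ such that for both S ∈ {L,R}: g̃₀ ∈ S(p,r); α̃^(S)·g̃₁ + β^(S)·g̃₀′ ∈ S(p,r); and (β^(S))²·g̃₀″ + 2α̃^(S)β^(S)·(g̃₁′ − g̃₁·q′/q) + (α̃^(S))²·g̃₂ ∈ S(p,r). Then Γ₀ = S̃(p), and dim Γ₀ = k(p − r − 1) + p + z_β + 1. -/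

import Mathlib

open Set Polynomial

noncomputable section

/-- `f : ℝ → ℝ` restricted to `[0,1]` is a spline of degree at most `d` for the knots
`0 = τ 0 < τ 1 < ⋯ < τ k < τ (k+1) = 1`, with smoothness of order `s i` at the interior
knot `τ i` (`1 ≤ i ≤ k`): on each knot interval `f` coincides with a polynomial of degree
at most `d`, and the one-sided derivatives of orders `0, …, s i` (computed from the
polynomial pieces) agree at each interior knot `τ i`. -/
def IsSplineOn (k : ℕ) (τ : ℕ → ℝ) (d : ℕ) (s : ℕ → ℕ) (f : ℝ → ℝ) : Prop :=
  ∃ P : ℕ → Polynomial ℝ,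
    (∀ i ≤ k, (P i).natDegree ≤ d) ∧
    (∀ i ≤ k, ∀ x ∈ Set.Icc (τ i) (τ (i+1)), f x = (P i).eval x) ∧
    (∀ i, 1 ≤ i → i ≤ k → ∀ j ≤ s i,
      ((fun Q : Polynomial ℝ => Polynomial.derivative Q)^[j] (P (i-1))).eval (τ i) =
        ((fun Q : Polynomial ℝ => Polynomial.derivative Q)^[j] (P i)).eval (τ i))

/-- The spline space `S(d, s)` on `[0,1]`, as a set of functions `[0,1] → ℝ`:
restrictions to `[0,1]` of the functions described by `IsSplineOn`. -/
def SplineSpace (k : ℕ) (τ : ℕ → ℝ) (d : ℕ) (s : ℕ → ℕ) :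
    Set (Set.Icc (0:ℝ) 1 → ℝ) :=
  {g | ∃ f : ℝ → ℝ, IsSplineOn k τ d s f ∧ ∀ x : Set.Icc (0:ℝ) 1, g x = f x.1}
/-- The set Γ₀: twice differentiable functions g̃₀ on [0,1] for which there exist a
differentiable g̃₁ and a function g̃₂ such that g̃₀ ∈ S(p,r) and, for both S ∈ {L,R},
α̃^(S)·g̃₁ + β^(S)·g̃₀′ ∈ S(p,r) and
(β^(S))²·g̃₀″ + 2α̃^(S)β^(S)·(g̃₁′ − g̃₁·q′/q) + (α̃^(S))²·g̃₂ ∈ S(p,r). -/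
def Gamma0 (k : ℕ) (τ : ℕ → ℝ) (p r : ℕ) (αtL αtR βL βR q : Polynomial ℝ) :
    Set (Set.Icc (0:ℝ) 1 → ℝ) :=
  {g | ∃ g0 g1 g2 : ℝ → ℝ,
    (∀ x : Set.Icc (0:ℝ) 1, g x = g0 x.1) ∧
    DifferentiableOn ℝ g0 (Set.Icc 0 1) ∧
    DifferentiableOn ℝ (derivWithin g0 (Set.Icc 0 1)) (Set.Icc 0 1) ∧
    DifferentiableOn ℝ g1 (Set.Icc 0 1) ∧
    IsSplineOn k τ p (fun _ => r) g0 ∧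
    (∀ A B : Polynomial ℝ, ((A, B) = (αtL, βL) ∨ (A, B) = (αtR, βR)) →
      IsSplineOn k τ p (fun _ => r)
        (fun v => A.eval v * g1 v + B.eval v * derivWithin g0 (Set.Icc 0 1) v) ∧
      IsSplineOn k τ p (fun _ => r) (fun v =>
        (B.eval v) ^ 2 * derivWithin (derivWithin g0 (Set.Icc 0 1)) (Set.Icc 0 1) v +
          2 * A.eval v * B.eval v *
            (derivWithin g1 (Set.Icc 0 1) v -
              g1 v * (Polynomial.derivative q).eval v / q.eval v) +
          (A.eval v) ^ 2 * g2 v))}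


/-! ### Helper lemmas -/

theorem aux_dvd (A B : Polynomial ℝ) (t : ℝ) (n : ℕ) :
    (∀ j ≤ n, ((fun Q : Polynomial ℝ => Polynomial.derivative Q)^[j] A).eval t =
        ((fun Q : Polynomial ℝ => Polynomial.derivative Q)^[j] B).eval t) ↔
      (X - C t) ^ (n + 1) ∣ B - A := by
  by_cases h : B - A = 0
  · have : B = A := sub_eq_zero.1 h
    subst this
    simp
  · rw [← Polynomial.le_rootMultiplicity_iff h, Nat.succ_le_iff,
      Polynomial.lt_rootMultiplicity_iff_isRoot_iterate_derivative h]
    refine forall_congr' fun j => forall_congr' fun _ => ?_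
    rw [Polynomial.iterate_derivative_sub, Polynomial.IsRoot.def, Polynomial.eval_sub, sub_eq_zero]
    exact eq_comm

theorem isSplineOn_iff (k : ℕ) (τ : ℕ → ℝ) (d : ℕ) (s : ℕ → ℕ) (f : ℝ → ℝ) :
    IsSplineOn k τ d s f ↔ ∃ P : ℕ → Polynomial ℝ,
      (∀ i ≤ k, (P i).natDegree ≤ d) ∧
      (∀ i ≤ k, ∀ x ∈ Set.Icc (τ i) (τ (i+1)), f x = (P i).eval x) ∧
      (∀ i < k, (X - C (τ (i+1))) ^ (s (i+1) + 1) ∣ P (i+1) - P i) := by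
  unfold IsSplineOn
  refine exists_congr fun P => and_congr_right fun _ => and_congr_right fun _ => ?_
  constructor
  · intro h i hi
    exact (aux_dvd _ _ _ _).1 (h (i+1) (by omega) (by omega))
  · intro h i h1 hk
    obtain ⟨i, rfl⟩ : ∃ j, i = j + 1 := ⟨i - 1, by omega⟩
    exact (aux_dvd _ _ _ _).2 (h i (by omega))

theorem tau_mono {k : ℕ} {τ : ℕ → ℝ} (hτ : ∀ i ≤ k, τ i < τ (i+1)) :
    ∀ i j, i ≤ j → j ≤ k + 1 → τ i ≤ τ j := by
  intro i j hij
  induction j, hij using Nat.le_induction with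
  | base => intro _; exact le_rfl
  | succ n hn ih => intro h; exact (ih (by omega)).trans (hτ n (by omega)).le

def glueFn (k : ℕ) (τ : ℕ → ℝ) (P0 : Polynomial ℝ) (D : ℕ → Polynomial ℝ) (x : ℝ) : ℝ :=
  P0.eval x + ∑ j ∈ Finset.range k, if τ (j+1) ≤ x then (D j).eval x else 0

theorem glueFn_piece {k : ℕ} {τ : ℕ → ℝ} (hτ : ∀ i ≤ k, τ i < τ (i+1))
    (P0 : Polynomial ℝ) (D : ℕ → Polynomial ℝ) (hD : ∀ j < k, (D j).eval (τ (j+1)) = 0)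
    (i : ℕ) (hi : i ≤ k) (x : ℝ) (hx : x ∈ Set.Icc (τ i) (τ (i+1))) :
    glueFn k τ P0 D x = (P0 + ∑ j ∈ Finset.range i, D j).eval x := by
  unfold glueFn
  rw [Polynomial.eval_add, Polynomial.eval_finsetSum]
  congr 1
  symm
  rw [← Finset.sum_subset (Finset.range_mono hi)
    (f := fun j => if τ (j+1) ≤ x then (D j).eval x else 0)]
  · refine Finset.sum_congr rfl fun j hj => ?_
    rw [Finset.mem_range] at hj
    rw [if_pos ((tau_mono hτ (j+1) i (by omega) (by omega)).trans hx.1)]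
  · intro j hj hji
    rw [Finset.mem_range] at hj hji
    have h1 := tau_mono hτ (i+1) (j+1) (by omega) (by omega)
    split_ifs with h
    · have : x = τ (j+1) := le_antisymm (hx.2.trans h1) h
      rw [this]; exact hD j hj
    · rfl

theorem exists_glue {k : ℕ} {τ : ℕ → ℝ} (hτ : ∀ i ≤ k, τ i < τ (i+1))
    (P : ℕ → Polynomial ℝ) (hP : ∀ j < k, (P (j+1) - P j).eval (τ (j+1)) = 0) :
    ∃ f : ℝ → ℝ, ∀ i ≤ k, ∀ x ∈ Set.Icc (τ i) (τ (i+1)), f x = (P i).eval x := by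
  refine ⟨glueFn k τ (P 0) (fun j => P (j+1) - P j), fun i hi x hx => ?_⟩
  rw [glueFn_piece hτ _ _ hP i hi x hx, Finset.sum_range_sub]
  simp

theorem exists_piece {k : ℕ} {τ : ℕ → ℝ} (hτ0 : τ 0 = 0) (hτ1 : τ (k+1) = 1)
    (x : ℝ) (hx : x ∈ Set.Icc (0:ℝ) 1) : ∃ i ≤ k, x ∈ Set.Icc (τ i) (τ (i+1)) := by
  have key : ∀ n, x ≤ τ (n+1) → ∃ i ≤ n, x ∈ Set.Icc (τ i) (τ (i+1)) := by
    intro n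
    induction n with
    | zero => intro h; exact ⟨0, le_rfl, by rw [hτ0]; exact hx.1, h⟩
    | succ n ih =>
      intro h
      by_cases h' : x ≤ τ (n+1)
      · obtain ⟨i, hi, h2⟩ := ih h'
        exact ⟨i, by omega, h2⟩
      · exact ⟨n+1, le_rfl, (not_le.1 h').le, h⟩
  exact key k (by rw [hτ1]; exact hx.2)

theorem piece_sub {k : ℕ} {τ : ℕ → ℝ} (hτ0 : τ 0 = 0) (hτ1 : τ (k+1) = 1)
    (hτ : ∀ i ≤ k, τ i < τ (i+1)) (i : ℕ) (hi : i ≤ k) :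
    Set.Icc (τ i) (τ (i+1)) ⊆ Set.Icc (0:ℝ) 1 := by
  apply Set.Icc_subset_Icc
  · rw [← hτ0]; exact tau_mono hτ _ _ (by omega) (by omega)
  · rw [← hτ1]; exact tau_mono hτ _ _ (by omega) (by omega)

theorem derivWithin_piece {f : ℝ → ℝ} {P : Polynomial ℝ} {a b x : ℝ} (hab : a < b)
    (hsub : Set.Icc a b ⊆ Set.Icc (0:ℝ) 1) (hf : DifferentiableOn ℝ f (Set.Icc 0 1))
    (hP : ∀ x ∈ Set.Icc a b, f x = P.eval x) (hx : x ∈ Set.Icc a b) :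
    derivWithin f (Set.Icc 0 1) x = (derivative P).eval x := by
  have h1 := ((hf x (hsub hx)).hasDerivWithinAt).mono hsub
  have h2 : HasDerivWithinAt f ((derivative P).eval x) (Set.Icc a b) x :=
    (P.hasDerivAt x).hasDerivWithinAt.congr hP (hP x hx)
  exact (uniqueDiffOn_Icc hab x hx).eq_deriv _ h1 h2

theorem hasDeriv_glue {k : ℕ} {τ : ℕ → ℝ} (hτ0 : τ 0 = 0) (hτ1 : τ (k+1) = 1)
    (hτ : ∀ i ≤ k, τ i < τ (i+1)) {f g : ℝ → ℝ} {P : ℕ → Polynomial ℝ}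
    (hf : ∀ i ≤ k, ∀ x ∈ Set.Icc (τ i) (τ (i+1)), f x = (P i).eval x)
    (hg : ∀ i ≤ k, ∀ x ∈ Set.Icc (τ i) (τ (i+1)), g x = (derivative (P i)).eval x) :
    ∀ x ∈ Set.Icc (0:ℝ) 1, HasDerivWithinAt f (g x) (Set.Icc 0 1) x := by
  have piece : ∀ i ≤ k, ∀ x, HasDerivWithinAt f (g x) (Set.Icc (τ i) (τ (i+1))) x := by
    intro i hi x
    by_cases hx : x ∈ Set.Icc (τ i) (τ (i+1))
    · rw [hg i hi x hx]
      exact ((P i).hasDerivAt x).hasDerivWithinAt.congr (hf i hi) (hf i hi x hx)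
    · exact HasFDerivWithinAt.of_notMem_closure (by rwa [isClosed_Icc.closure_eq])
  have key : ∀ n ≤ k, ∀ x, HasDerivWithinAt f (g x) (Set.Icc (τ 0) (τ (n+1))) x := by
    intro n
    induction n with
    | zero => intro h x; exact piece 0 h x
    | succ n ih =>
      intro h x
      rw [← Set.Icc_union_Icc_eq_Icc (tau_mono hτ 0 (n+1) (by omega) (by omega))
        (hτ (n+1) h).le]
      exact (ih (by omega) x).union (piece (n+1) h x)
  intro x _
  have := key k le_rfl x
  rwa [hτ0, hτ1] at this

theorem dvd_deriv {D : Polynomial ℝ} {t : ℝ} {n : ℕ} (h : (X - C t) ^ (n+1) ∣ D) :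
    (X - C t) ^ n ∣ derivative D := by
  obtain ⟨G, rfl⟩ := h
  rw [derivative_mul, derivative_X_sub_C_pow]
  refine dvd_add ?_ ?_
  · simp only [Nat.add_sub_cancel]
    exact Dvd.dvd.mul_right (Dvd.dvd.mul_left dvd_rfl _) _
  · exact Dvd.dvd.mul_right (pow_dvd_pow _ (by omega)) _

theorem eval_zero_of_dvd {D : Polynomial ℝ} {t : ℝ} {n : ℕ} (hn : n ≠ 0)
    (h : (X - C t) ^ n ∣ D) : D.eval t = 0 := by
  obtain ⟨G, rfl⟩ := h
  simp [hn]

/-- integration: vanishing of the derivative upgrades vanishing of the polynomial -/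
theorem dvd_of_deriv {D : Polynomial ℝ} {t : ℝ} {n : ℕ} (h0 : D.eval t = 0)
    (h : (X - C t) ^ n ∣ derivative D) : (X - C t) ^ (n+1) ∣ D := by
  have := (aux_dvd 0 D t n).1 ?_
  · simpa using this
  intro j hj
  rcases j with _ | j
  · simp [h0]
  · rcases n with _ | n
    · omega
    have h' := (aux_dvd 0 (derivative D) t n).2 (by simpa using h) j (by omega)
    rw [Function.iterate_succ_apply, Function.iterate_succ_apply]
    simpa using h'

theorem dvd_cancel {B D : Polynomial ℝ} {t : ℝ} {n : ℕ} (hB : B.eval t ≠ 0)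
    (h : (X - C t) ^ n ∣ B * D) : (X - C t) ^ n ∣ D := by
  have : IsCoprime ((X - C t) ^ n) B := by
    apply IsCoprime.pow_left
    refine (Polynomial.irreducible_X_sub_C t).coprime_iff_not_dvd.2 ?_
    rw [Polynomial.dvd_iff_isRoot]
    exact hB
  exact this.dvd_of_dvd_mul_left h

/-- two polynomials agreeing on a nondegenerate interval coincide -/
theorem poly_eq_of_Icc {A B : Polynomial ℝ} {a b : ℝ} (hab : a < b)
    (h : ∀ x ∈ Set.Icc a b, A.eval x = B.eval x) : A = B :=
  Polynomial.eq_of_infinite_eval_eq A B ((Set.Icc_infinite hab).mono h)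

theorem natDegree_deriv_le {P : Polynomial ℝ} {n m : ℕ} (h : P.natDegree ≤ n) (hm : n ≤ m + 1) :
    (derivative P).natDegree ≤ m :=
  (natDegree_derivative_le P).trans (by omega)

theorem natDegree_deriv2_le {P : Polynomial ℝ} {n m : ℕ} (h : P.natDegree ≤ n) (hm : n ≤ m + 2) :
    (derivative (derivative P)).natDegree ≤ m :=
  natDegree_deriv_le (natDegree_deriv_le h (m := m+1) (by omega)) le_rfl

theorem natDegree_mul_le' {A B : Polynomial ℝ} {a b c : ℕ} (hA : A.natDegree ≤ a)
    (hB : B.natDegree ≤ b) (h : a + b ≤ c) : (A * B).natDegree ≤ c :=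
  natDegree_mul_le.trans (by omega)

theorem gamma_sub (p r k : ℕ) 
    (τ : ℕ → ℝ) (hτ0 : τ 0 = 0) (hτ1 : τ (k+1) = 1)
    (hτ : ∀ i ≤ k, τ i < τ (i+1))
    (βL βR q αtL αtR : Polynomial ℝ) :
    Gamma0 k τ p r αtL αtR βL βR q ⊆
      SplineSpace k τ p
        (fun i => if (αtL * q * βR - αtR * q * βL).eval (τ i) = 0 then r else r + 1) := by
  rintro g ⟨g0, g1, g2, hg, hd0, -, -, hs0, hS⟩
  refine ⟨g0, ?_, hg⟩
  obtain ⟨sL, -⟩ := hS αtL βL (Or.inl rfl)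
  obtain ⟨sR, -⟩ := hS αtR βR (Or.inr rfl)
  rw [isSplineOn_iff] at hs0 sL sR ⊢
  obtain ⟨P, hPd, hPe, hPj⟩ := hs0
  obtain ⟨L, -, hLe, hLj⟩ := sL
  obtain ⟨R, -, hRe, hRj⟩ := sR
  refine ⟨P, hPd, hPe, fun i hi => ?_⟩
  have hid : ∀ i ≤ k, (αtL * βR - αtR * βL) * derivative (P i) = αtL * R i - αtR * L i := by
    intro i hi
    apply poly_eq_of_Icc (hτ i hi)
    intro x hx
    have h1 := hLe i hi x hx
    have h2 := hRe i hi x hx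
    have h3 := derivWithin_piece (hτ i hi) (piece_sub hτ0 hτ1 hτ i hi) hd0 (hPe i hi) hx
    simp only [h3] at h1 h2
    simp only [eval_mul, eval_sub, ← h1, ← h2]
    ring
  by_cases hb : (αtL * q * βR - αtR * q * βL).eval (τ (i+1)) = 0
  · simp only [hb, if_true]; exact hPj i hi
  · simp only [hb, if_false]
    apply dvd_of_deriv
    · exact eval_zero_of_dvd (by omega) (hPj i hi)
    · apply dvd_cancel (B := αtL * βR - αtR * βL)
      · intro h0
        apply hb
        have : αtL * q * βR - αtR * q * βL = q * (αtL * βR - αtR * βL) := by ring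
        rw [this, eval_mul, h0, mul_zero]
      · have : (αtL * βR - αtR * βL) * derivative (P (i+1) - P i) =
            αtL * (R (i+1) - R i) - αtR * (L (i+1) - L i) := by
          rw [derivative_sub, mul_sub, hid _ (by omega), hid _ (by omega)]
          ring
        rw [this]
        exact dvd_sub (Dvd.dvd.mul_left (hRj i hi) _) (Dvd.dvd.mul_left (hLj i hi) _)

theorem sub_gamma (p r k : ℕ) (hr2 : 2 ≤ r) (hrp : r + 3 ≤ p)
    (τ : ℕ → ℝ) (hτ0 : τ 0 = 0) (hτ1 : τ (k+1) = 1)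
    (hτ : ∀ i ≤ k, τ i < τ (i+1))
    (αL αR βL βR : Polynomial ℝ)
    (hdαL : αL.natDegree ≤ 1) (hdαR : αR.natDegree ≤ 1)
    (hdβL : βL.natDegree ≤ 1) (hdβR : βR.natDegree ≤ 1)
    (hsign : ∀ v ∈ Set.Icc (0:ℝ) 1, αL.eval v * αR.eval v < 0)
    (q αtL αtR : Polynomial ℝ) (hαtL : αtL * q = αL) (hαtR : αtR * q = αR) :
    SplineSpace k τ p
        (fun i => if (αL * βR - αR * βL).eval (τ i) = 0 then r else r + 1) ⊆
      Gamma0 k τ p r αtL αtR βL βR q := by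
  rintro g ⟨g0, hs, hg⟩
  rw [isSplineOn_iff] at hs
  obtain ⟨P, hPd, hPe, hPj⟩ := hs
  have hPr : ∀ i < k, (X - C (τ (i+1))) ^ (r+1) ∣ P (i+1) - P i := by
    intro i hi
    refine dvd_trans (pow_dvd_pow _ ?_) (hPj i hi)
    split_ifs <;> omega
  have hP1 : ∀ i < k, (X - C (τ (i+1))) ^ r ∣ derivative (P (i+1)) - derivative (P i) := by
    intro i hi
    rw [← derivative_sub]; exact dvd_deriv (hPr i hi)
  have hP2 : ∀ i < k, (X - C (τ (i+1))) ^ (r-1) ∣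
      derivative (derivative (P (i+1))) - derivative (derivative (P i)) := by
    intro i hi
    rw [← derivative_sub]
    exact dvd_deriv (by rw [Nat.sub_add_cancel (by omega)]; exact hP1 i hi)
  obtain ⟨f1, hf1⟩ := exists_glue hτ (fun i => derivative (P i))
    (fun j hj => eval_zero_of_dvd (by omega) (hP1 j hj))
  obtain ⟨f2, hf2⟩ := exists_glue hτ (fun i => derivative (derivative (P i)))
    (fun j hj => eval_zero_of_dvd (by omega) (hP2 j hj))
  have hD0 := hasDeriv_glue hτ0 hτ1 hτ hPe hf1
  have hD1 := hasDeriv_glue hτ0 hτ1 hτ hf1 hf2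
  have hu : UniqueDiffOn ℝ (Set.Icc (0:ℝ) 1) := uniqueDiffOn_Icc (by norm_num)
  have e1 : ∀ x ∈ Set.Icc (0:ℝ) 1, derivWithin g0 (Set.Icc 0 1) x = f1 x :=
    fun x hx => (hD0 x hx).derivWithin (hu x hx)
  have hD1' : ∀ x ∈ Set.Icc (0:ℝ) 1,
      HasDerivWithinAt (derivWithin g0 (Set.Icc 0 1)) (f2 x) (Set.Icc 0 1) x :=
    fun x hx => (hD1 x hx).congr e1 (e1 x hx)
  have e2 : ∀ x ∈ Set.Icc (0:ℝ) 1,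
      derivWithin (derivWithin g0 (Set.Icc 0 1)) (Set.Icc 0 1) x = f2 x :=
    fun x hx => (hD1' x hx).derivWithin (hu x hx)
  -- the coefficients at the knots
  obtain ⟨tL, htL⟩ : ∃ t : ℕ → ℝ, ∀ i, t i = βL.eval (τ (i+1)) / αL.eval (τ (i+1)) :=
    ⟨_, fun _ => rfl⟩
  obtain ⟨tR, htR⟩ : ∃ t : ℕ → ℝ, ∀ i, t i = βR.eval (τ (i+1)) / αR.eval (τ (i+1)) :=
    ⟨_, fun _ => rfl⟩
  have hmem : ∀ i < k, τ (i+1) ∈ Set.Icc (0:ℝ) 1 := fun i hi =>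
    piece_sub hτ0 hτ1 hτ i hi.le ⟨(hτ i hi.le).le, le_rfl⟩
  have hnL : ∀ v ∈ Set.Icc (0:ℝ) 1, αL.eval v ≠ 0 := by
    intro v hv h
    have := hsign v hv
    simp [h] at this
  have hnR : ∀ v ∈ Set.Icc (0:ℝ) 1, αR.eval v ≠ 0 := by
    intro v hv h
    have := hsign v hv
    simp [h] at this
  have hq0 : ∀ v ∈ Set.Icc (0:ℝ) 1, q.eval v ≠ 0 := by
    intro v hv h
    apply hnL v hv
    rw [← hαtL, eval_mul, h, mul_zero]
  have hW : ∀ (n : ℕ) {A D : Polynomial ℝ} {t : ℝ}, A.eval t = 0 → (X - C t) ^ n ∣ D →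
      (X - C t) ^ (n+1) ∣ A * D := by
    intro n A D t h1 h2
    rw [pow_succ']
    exact mul_dvd_mul (Polynomial.dvd_iff_isRoot.2 h1) h2
  have hzL : ∀ i < k, (βL - C (tL i) * αL).eval (τ (i+1)) = 0 := by
    intro i hi
    have := hnL _ (hmem i hi)
    simp only [eval_sub, eval_mul, eval_C, htL]
    field_simp
    ring
  have hzR : ∀ i < k, (βR - C (tR i) * αR).eval (τ (i+1)) = 0 := by
    intro i hi
    have := hnR _ (hmem i hi)
    simp only [eval_sub, eval_mul, eval_C, htR]
    field_simp
    ring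
  have htt : ∀ i < k, (αL * βR - αR * βL).eval (τ (i+1)) = 0 → tL i = tR i := by
    intro i hi h
    have h1 := hnL _ (hmem i hi)
    have h2 := hnR _ (hmem i hi)
    rw [htL, htR]
    simp only [eval_sub, eval_mul] at h
    field_simp
    linarith
  -- jumps
  obtain ⟨E, hE⟩ : ∃ E : ℕ → Polynomial ℝ, ∀ i,
      E i = C (-(tL i + tR i) / 2) * derivative (P (i+1) - P i) := ⟨_, fun _ => rfl⟩
  obtain ⟨F, hF⟩ : ∃ F : ℕ → Polynomial ℝ, ∀ i,
      F i = C (tL i * tR i) * derivative (derivative (P (i+1) - P i)) := ⟨_, fun _ => rfl⟩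
  obtain ⟨H, hH⟩ : ∃ H : ℕ → Polynomial ℝ, ∀ i, H i = ∑ j ∈ Finset.range i, E j :=
    ⟨_, fun _ => rfl⟩
  obtain ⟨K, hK⟩ : ∃ K : ℕ → Polynomial ℝ, ∀ i, K i = ∑ j ∈ Finset.range i, F j :=
    ⟨_, fun _ => rfl⟩
  have hHs : ∀ i, H (i+1) - H i = E i := by
    intro i; rw [hH, hH, Finset.sum_range_succ]; ring
  have hKs : ∀ i, K (i+1) - K i = F i := by
    intro i; rw [hK, hK, Finset.sum_range_succ]; ring
  have hHr : ∀ i < k, (X - C (τ (i+1))) ^ r ∣ H (i+1) - H i := by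
    intro i hi
    rw [hHs, hE, derivative_sub]
    exact Dvd.dvd.mul_left (hP1 i hi) _
  have hH1r : ∀ i < k, (X - C (τ (i+1))) ^ (r-1) ∣ derivative (H (i+1)) - derivative (H i) := by
    intro i hi
    rw [← derivative_sub]
    exact dvd_deriv (by rw [Nat.sub_add_cancel (by omega)]; exact hHr i hi)
  have hKr : ∀ i < k, (X - C (τ (i+1))) ^ (r-1) ∣ K (i+1) - K i := by
    intro i hi
    rw [hKs, hF, derivative_sub, derivative_sub]
    exact Dvd.dvd.mul_left (hP2 i hi) _
  have hdj : ∀ i < k, (P (i+1) - P i).natDegree ≤ p := fun i hi =>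
    (natDegree_sub_le _ _).trans (max_le (hPd _ (by omega)) (hPd _ (by omega)))
  have hHd : ∀ i ≤ k, (H i).natDegree ≤ p - 1 := by
    intro i hi
    rw [hH]
    apply natDegree_sum_le_of_forall_le
    intro j hj
    rw [Finset.mem_range] at hj
    rw [hE]
    exact (natDegree_C_mul_le _ _).trans (natDegree_deriv_le (hdj j (by omega)) (by omega))
  have hKd : ∀ i ≤ k, (K i).natDegree ≤ p - 2 := by
    intro i hi
    rw [hK]
    apply natDegree_sum_le_of_forall_le
    intro j hj
    rw [Finset.mem_range] at hj
    rw [hF]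
    exact (natDegree_C_mul_le _ _).trans (natDegree_deriv2_le (hdj j (by omega)) (by omega))
  obtain ⟨h, hh⟩ := exists_glue hτ H (fun j hj => eval_zero_of_dvd (by omega) (hHr j hj))
  obtain ⟨h1, hh1⟩ := exists_glue hτ (fun i => derivative (H i))
    (fun j hj => eval_zero_of_dvd (by omega) (hH1r j hj))
  obtain ⟨h2, hh2⟩ := exists_glue hτ K (fun j hj => eval_zero_of_dvd (by omega) (hKr j hj))
  have hDh := hasDeriv_glue hτ0 hτ1 hτ hh hh1
  have hDg1 : ∀ x ∈ Set.Icc (0:ℝ) 1, HasDerivWithinAt (fun v => q.eval v * h v)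
      ((derivative q).eval x * h x + q.eval x * h1 x) (Set.Icc 0 1) x := fun x hx =>
    (q.hasDerivAt x).hasDerivWithinAt.mul (hDh x hx)
  have e3 : ∀ x ∈ Set.Icc (0:ℝ) 1, derivWithin (fun v => q.eval v * h v) (Set.Icc 0 1) x =
      (derivative q).eval x * h x + q.eval x * h1 x :=
    fun x hx => (hDg1 x hx).derivWithin (hu x hx)
  refine ⟨g0, fun v => q.eval v * h v, fun v => (q.eval v) ^ 2 * h2 v, hg,
    fun x hx => (hD0 x hx).differentiableWithinAt,
    fun x hx => (hD1' x hx).differentiableWithinAt,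
    fun x hx => (hDg1 x hx).differentiableWithinAt, ?_, ?_⟩
  · rw [isSplineOn_iff]
    exact ⟨P, hPd, hPe, hPr⟩
  -- the general verification for one side
  have main : ∀ A B α : Polynomial ℝ, A * q = α → α.natDegree ≤ 1 → B.natDegree ≤ 1 →
      (∀ i < k, (B - C (tL i) * α).eval (τ (i+1)) = 0 ∨
        (B - C (tR i) * α).eval (τ (i+1)) = 0) →
      IsSplineOn k τ p (fun _ => r)
        (fun v => A.eval v * (q.eval v * h v) + B.eval v * derivWithin g0 (Set.Icc 0 1) v) ∧
      IsSplineOn k τ p (fun _ => r) (fun v =>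
        (B.eval v) ^ 2 * derivWithin (derivWithin g0 (Set.Icc 0 1)) (Set.Icc 0 1) v +
          2 * A.eval v * B.eval v *
            (derivWithin (fun v => q.eval v * h v) (Set.Icc 0 1) v -
              (q.eval v * h v) * (Polynomial.derivative q).eval v / q.eval v) +
          (A.eval v) ^ 2 * ((q.eval v) ^ 2 * h2 v)) := by
    intro A B α hA hα hB hz
    have hzz : ∀ i < k, (αL * βR - αR * βL).eval (τ (i+1)) = 0 →
        (B - C (tL i) * α).eval (τ (i+1)) = 0 ∧ (B - C (tR i) * α).eval (τ (i+1)) = 0 := by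
      intro i hi h0
      have := hz i hi
      rw [htt i hi h0] at this ⊢
      simpa using this
    constructor
    · rw [isSplineOn_iff]
      refine ⟨fun i => α * H i + B * derivative (P i), fun i hi => ?_, fun i hi x hx => ?_,
        fun i hi => ?_⟩
      · exact natDegree_add_le_of_degree_le
          (natDegree_mul_le' hα (hHd i hi) (by omega))
          (natDegree_mul_le' hB (natDegree_deriv_le (hPd i hi) (m := p-1) (by omega)) (by omega))
      · have hx' := piece_sub hτ0 hτ1 hτ i hi hx
        dsimp only
        rw [e1 x hx', hf1 i hi x hx, hh i hi x hx, ← hA]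
        simp only [eval_add, eval_mul]
        ring
      · dsimp only
        have : α * H (i+1) + B * derivative (P (i+1)) - (α * H i + B * derivative (P i)) =
            α * (H (i+1) - H i) + B * derivative (P (i+1) - P i) := by
          rw [derivative_sub]; ring
        rw [this, hHs, hE]
        have h3 := hPj i hi
        by_cases hb : (αL * βR - αR * βL).eval (τ (i+1)) = 0
        · have hzz' := (hzz i hi hb).1
          have h4 := dvd_deriv (hPr i hi)
          have : α * (C (-(tL i + tR i) / 2) * derivative (P (i+1) - P i)) +
              B * derivative (P (i+1) - P i) =
              (B - C (tL i) * α) * derivative (P (i+1) - P i) := by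
            rw [← htt i hi hb]
            have : -(tL i + tL i) / 2 = - tL i := by ring
            rw [this, C_neg]
            ring
          rw [this]
          exact hW r hzz' h4
        · simp only [hb, if_false] at h3
          have h4 := dvd_deriv h3
          exact dvd_add (Dvd.dvd.mul_left (Dvd.dvd.mul_left h4 _) _) (Dvd.dvd.mul_left h4 _)
    · rw [isSplineOn_iff]
      refine ⟨fun i => B ^ 2 * derivative (derivative (P i)) + 2 * (α * B) * derivative (H i) +
        α ^ 2 * K i, fun i hi => ?_, fun i hi x hx => ?_, fun i hi => ?_⟩
      · have h2d : ∀ A : Polynomial ℝ, A.natDegree ≤ 1 → (A ^ 2).natDegree ≤ 2 := by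
          intro A hA
          rw [sq]; exact natDegree_mul_le' hA hA le_rfl
        refine natDegree_add_le_of_degree_le (natDegree_add_le_of_degree_le ?_ ?_) ?_
        · exact natDegree_mul_le' (h2d B hB)
            (natDegree_deriv2_le (hPd i hi) (m := p-2) (by omega)) (by omega)
        · have : (2 : Polynomial ℝ) = C 2 := rfl
          rw [this, mul_assoc]
          refine (natDegree_C_mul_le _ _).trans ?_
          exact natDegree_mul_le' (natDegree_mul_le' hα hB (le_refl 2))
            (natDegree_deriv_le (hHd i hi) (m := p-2) (by omega)) (by omega)
        · exact natDegree_mul_le' (h2d α hα) (hKd i hi) (by omega)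
      · have hx' := piece_sub hτ0 hτ1 hτ i hi hx
        have hq := hq0 x hx'
        dsimp only
        rw [e2 x hx', e3 x hx', hf2 i hi x hx, hh i hi x hx, hh1 i hi x hx, hh2 i hi x hx, ← hA]
        simp only [eval_add, eval_mul, eval_pow, eval_ofNat]
        field_simp
        ring
      · dsimp only
        set D := P (i+1) - P i with hDdef
        have : B ^ 2 * derivative (derivative (P (i+1))) + 2 * (α * B) * derivative (H (i+1)) +
            α ^ 2 * K (i+1) - (B ^ 2 * derivative (derivative (P i)) +
              2 * (α * B) * derivative (H i) + α ^ 2 * K i) =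
            (B - C (tL i) * α) * ((B - C (tR i) * α) * derivative (derivative D)) := by
          have e4 : derivative (H (i+1)) = derivative (H i) +
              C (-(tL i + tR i) / 2) * derivative (derivative D) := by
            rw [← sub_eq_iff_eq_add', ← derivative_sub, hHs, hE, derivative_C_mul]
          have e5 : K (i+1) = K i + C (tL i * tR i) * derivative (derivative D) := by
            rw [← sub_eq_iff_eq_add', hKs, hF]
          have e6 : derivative (derivative (P (i+1))) =
              derivative (derivative (P i)) + derivative (derivative D) := by
            rw [hDdef, derivative_sub, derivative_sub]; ring
          have e7 : (2 : Polynomial ℝ) * C (-(tL i + tR i) / 2) = - (C (tL i) + C (tR i)) := by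
            have : (2 : Polynomial ℝ) = C 2 := rfl
            rw [this, ← C_mul, ← C_add, ← C_neg]
            congr 1
            ring
          rw [e4, e5, e6, C_mul]
          linear_combination (α * B * derivative (derivative D)) * e7
        rw [this]
        have h3 := hPj i hi
        by_cases hb : (αL * βR - αR * βL).eval (τ (i+1)) = 0
        · obtain ⟨z1, z2⟩ := hzz i hi hb
          refine hW r z1 ?_
          have h5 : (X - C (τ (i+1))) ^ (r-1) ∣ derivative (derivative D) := by
            rw [hDdef, derivative_sub, derivative_sub]; exact hP2 i hi
          have := hW (r-1) z2 h5
          rwa [Nat.sub_add_cancel (by omega)] at this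
        · simp only [hb, if_false] at h3
          have h4 := dvd_deriv (dvd_deriv h3)
          rcases hz i hi with z | z
          · exact hW r z (Dvd.dvd.mul_left h4 _)
          · rw [mul_left_comm]
            exact hW r z (Dvd.dvd.mul_left h4 _)
  rintro A B (hAB | hAB)
  · obtain ⟨rfl, rfl⟩ := Prod.mk.inj hAB
    exact main _ _ αL hαtL hdαL hdβL (fun i hi => Or.inl (hzL i hi))
  · obtain ⟨rfl, rfl⟩ := Prod.mk.inj hAB
    exact main _ _ αR hαtR hdαR hdβR (fun i hi => Or.inr (hzR i hi))

/-- parametrisation of the spline space by truncated powers -/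
def splineMap (k : ℕ) (τ : ℕ → ℝ) (d : ℕ) (s : ℕ → ℕ) :
    (degreeLT ℝ (d+1) × ((j : Fin k) → degreeLT ℝ (d - s (j.1+1)))) →ₗ[ℝ]
      (Set.Icc (0:ℝ) 1 → ℝ) where
  toFun u x := (u.1 : ℝ[X]).eval x.1 + ∑ j : Fin k, if τ (j.1+1) ≤ x.1 then
    ((X - C (τ (j.1+1))) ^ (s (j.1+1) + 1) * (u.2 j : ℝ[X])).eval x.1 else 0
  map_add' u v := by
    ext x
    simp only [Prod.fst_add, Prod.snd_add, Pi.add_apply, Submodule.coe_add, eval_add, mul_add]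
    have : ∀ a b c d : ℝ, a + b + (c + d) = a + c + (b + d) := by intros; ring
    rw [this, ← Finset.sum_add_distrib]
    congr 1
    refine Finset.sum_congr rfl fun j _ => ?_
    split_ifs <;> simp
  map_smul' c u := by
    ext x
    simp only [Prod.smul_fst, Prod.smul_snd, Pi.smul_apply, Submodule.coe_smul, eval_smul,
      mul_smul_comm, RingHom.id_apply, smul_eq_mul, mul_add, Finset.mul_sum]
    congr 1
    refine Finset.sum_congr rfl fun j _ => ?_
    split_ifs <;> simp

def jumpOf (k : ℕ) (τ : ℕ → ℝ) (d : ℕ) (s : ℕ → ℕ)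
    (u : (j : Fin k) → degreeLT ℝ (d - s (j.1+1))) (j : ℕ) : ℝ[X] :=
  if h : j < k then (X - C (τ (j+1))) ^ (s (j+1) + 1) * (u ⟨j, h⟩ : ℝ[X]) else 0

theorem splineMap_eq (k : ℕ) (τ : ℕ → ℝ) (d : ℕ) (s : ℕ → ℕ) (u) (x : Set.Icc (0:ℝ) 1) :
    splineMap k τ d s u x = glueFn k τ u.1 (jumpOf k τ d s u.2) x.1 := by
  unfold glueFn
  rw [Finset.sum_range]
  simp [splineMap, jumpOf]

theorem jumpOf_dvd (k : ℕ) (τ : ℕ → ℝ) (d : ℕ) (s : ℕ → ℕ) (u) (j : ℕ) :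
    (X - C (τ (j+1))) ^ (s (j+1) + 1) ∣ jumpOf k τ d s u j := by
  unfold jumpOf
  split_ifs
  · exact dvd_mul_right _ _
  · exact dvd_zero _

theorem natDegree_le_of_degreeLT {Q : ℝ[X]} {n m : ℕ} (h : Q ∈ degreeLT ℝ n) (hm : n ≤ m + 1) :
    Q.natDegree ≤ m := by
  by_cases h0 : Q = 0
  · simp [h0]
  rw [mem_degreeLT, degree_eq_natDegree h0] at h
  have : Q.natDegree < n := by exact_mod_cast h
  omega

theorem jumpOf_deg (k : ℕ) (τ : ℕ → ℝ) (d : ℕ) (s : ℕ → ℕ) (hs : ∀ i, s i < d) (u) (j : ℕ) :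
    (jumpOf k τ d s u j).natDegree ≤ d := by
  unfold jumpOf
  have := hs (j+1)
  split_ifs with h
  · refine natDegree_mul_le' (a := s (j+1) + 1) (b := d - s (j+1) - 1) ?_
      (natDegree_le_of_degreeLT (u ⟨j, h⟩).2 (by dsimp only; omega)) (by omega)
    rw [natDegree_pow, natDegree_X_sub_C, mul_one]
  · simp

theorem splineMap_inj {k : ℕ} {τ : ℕ → ℝ} (hτ0 : τ 0 = 0) (hτ1 : τ (k+1) = 1)
    (hτ : ∀ i ≤ k, τ i < τ (i+1)) (d : ℕ) (s : ℕ → ℕ) :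
    Function.Injective (splineMap k τ d s) := by
  rw [injective_iff_map_eq_zero]
  intro u hu
  have hz : ∀ i ≤ k, (u.1 : ℝ[X]) + ∑ j ∈ Finset.range i, jumpOf k τ d s u.2 j = 0 := by
    intro i hi
    apply poly_eq_of_Icc (hτ i hi)
    intro x hx
    have h1 := congrFun hu ⟨x, piece_sub hτ0 hτ1 hτ i hi hx⟩
    rw [splineMap_eq, glueFn_piece hτ _ _ (fun j _ => eval_zero_of_dvd (by omega)
      (jumpOf_dvd k τ d s u.2 j)) i hi x hx] at h1
    simpa using h1
  have h0 : u.1 = 0 := by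
    have := hz 0 (by omega)
    ext1
    simpa using this
  refine Prod.ext h0 ?_
  funext j
  have h1 := hz j.1 j.2.le
  have h2 := hz (j.1+1) j.2
  rw [Finset.sum_range_succ, ← add_assoc, h1, zero_add] at h2
  unfold jumpOf at h2
  rw [dif_pos j.2] at h2
  have h3 := (mul_eq_zero.1 h2).resolve_left (pow_ne_zero _ (X_sub_C_ne_zero _))
  ext1
  exact h3

theorem splineMap_range {k : ℕ} {τ : ℕ → ℝ} (hτ0 : τ 0 = 0) (hτ1 : τ (k+1) = 1)
    (hτ : ∀ i ≤ k, τ i < τ (i+1)) (d : ℕ) (s : ℕ → ℕ) (hs : ∀ i, s i < d) :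
    (LinearMap.range (splineMap k τ d s) : Set (Set.Icc (0:ℝ) 1 → ℝ)) =
      SplineSpace k τ d s := by
  ext g
  constructor
  · rintro ⟨u, rfl⟩
    refine ⟨glueFn k τ u.1 (jumpOf k τ d s u.2), ?_, fun x => splineMap_eq k τ d s u x⟩
    rw [isSplineOn_iff]
    refine ⟨fun i => u.1 + ∑ j ∈ Finset.range i, jumpOf k τ d s u.2 j, fun i hi => ?_,
      glueFn_piece hτ _ _ (fun j _ => eval_zero_of_dvd (by omega) (jumpOf_dvd k τ d s u.2 j)),
      fun i hi => ?_⟩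
    · refine natDegree_add_le_of_degree_le (natDegree_le_of_degreeLT u.1.2 le_rfl) ?_
      exact natDegree_sum_le_of_forall_le _ _ fun j _ => jumpOf_deg k τ d s hs _ j
    · dsimp only
      rw [Finset.sum_range_succ, add_sub_add_left_eq_sub, add_sub_cancel_left]
      exact jumpOf_dvd k τ d s u.2 i
  · rintro ⟨f, hf, hg⟩
    rw [isSplineOn_iff] at hf
    obtain ⟨P, hPd, hPe, hPj⟩ := hf
    have hex : ∀ j : Fin k, ∃ G : degreeLT ℝ (d - s (j.1+1)),
        P (j.1+1) - P j.1 = (X - C (τ (j.1+1))) ^ (s (j.1+1) + 1) * (G : ℝ[X]) := by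
      intro j
      obtain ⟨G, hG⟩ := hPj j.1 j.2
      refine ⟨⟨G, ?_⟩, hG⟩
      by_cases hG0 : G = 0
      · rw [hG0]; exact Submodule.zero_mem _
      rw [mem_degreeLT, degree_eq_natDegree hG0]
      have h1 : (P (j.1+1) - P j.1).natDegree ≤ d :=
        (natDegree_sub_le _ _).trans (max_le (hPd _ (by omega)) (hPd _ (by omega)))
      rw [hG, natDegree_mul (pow_ne_zero _ (X_sub_C_ne_zero _)) hG0, natDegree_pow,
        natDegree_X_sub_C] at h1
      have := hs (j.1+1)
      exact_mod_cast (by omega : G.natDegree < d - s (j.1+1))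
    choose G hG using hex
    have h0 : P 0 ∈ degreeLT ℝ (d+1) := by
      rw [mem_degreeLT]
      refine lt_of_le_of_lt (natDegree_le_iff_degree_le.1 (hPd 0 (by omega))) ?_
      exact_mod_cast Nat.lt_succ_self d
    refine ⟨(⟨P 0, h0⟩, G), ?_⟩
    ext x
    obtain ⟨i, hi, hx⟩ := exists_piece hτ0 hτ1 x.1 x.2
    rw [splineMap_eq, glueFn_piece hτ _ _ (fun j _ => eval_zero_of_dvd (by omega)
      (jumpOf_dvd k τ d s _ j)) i hi x.1 hx, hg, hPe i hi x.1 hx]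
    congr 1
    have : ∑ j ∈ Finset.range i, jumpOf k τ d s G j = ∑ j ∈ Finset.range i, (P (j+1) - P j) := by
      refine Finset.sum_congr rfl fun j hj => ?_
      rw [Finset.mem_range] at hj
      unfold jumpOf
      rw [dif_pos (by omega : j < k)]
      exact (hG ⟨j, by omega⟩).symm
    dsimp only
    rw [this, Finset.sum_range_sub]
    ring

theorem finrank_degreeLT' (n : ℕ) : Module.finrank ℝ (degreeLT ℝ n) = n := by
  rw [(degreeLTEquiv ℝ n).finrank_eq]; simp

theorem finite_degreeLT' (n : ℕ) : Module.Finite ℝ (degreeLT ℝ n) :=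
  Module.Finite.equiv (degreeLTEquiv ℝ n).symm

theorem finrank_spline {k : ℕ} {τ : ℕ → ℝ} (hτ0 : τ 0 = 0) (hτ1 : τ (k+1) = 1)
    (hτ : ∀ i ≤ k, τ i < τ (i+1)) (d : ℕ) (s : ℕ → ℕ) (hs : ∀ i, s i < d) :
    Module.finrank ℝ (Submodule.span ℝ (SplineSpace k τ d s)) =
      d + 1 + ∑ i ∈ Finset.Icc 1 k, (d - s i) := by
  rw [← splineMap_range hτ0 hτ1 hτ d s hs, Submodule.span_eq,
    LinearMap.finrank_range_of_inj (splineMap_inj hτ0 hτ1 hτ d s)]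
  have := finite_degreeLT'
  rw [Module.finrank_prod, Module.finrank_pi_fintype]
  simp only [finrank_degreeLT']
  congr 1
  rw [← Finset.sum_range (fun j => d - s (j+1)), Finset.range_eq_Ico,
    Finset.sum_Ico_add' (fun j => d - s j) 0 k 1]
  rfl

/-- the space Γ₀ and its dimension. -/
theorem stmt7 (p r k : ℕ) (hp : 5 ≤ p) (hr2 : 2 ≤ r) (hrp : r + 3 ≤ p)
    (τ : ℕ → ℝ) (hτ0 : τ 0 = 0) (hτ1 : τ (k+1) = 1)
    (hτ : ∀ i ≤ k, τ i < τ (i+1))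
    (αL αR βL βR : Polynomial ℝ)
    (hdαL : αL.natDegree ≤ 1) (hdαR : αR.natDegree ≤ 1)
    (hdβL : βL.natDegree ≤ 1) (hdβR : βR.natDegree ≤ 1)
    (hsign : ∀ v ∈ Set.Icc (0:ℝ) 1, αL.eval v * αR.eval v < 0)
    -- q is the monic greatest common divisor of αL and αR
    (q : Polynomial ℝ) (hqM : q.Monic) (hqL : q ∣ αL) (hqR : q ∣ αR)
    (hqgcd : ∀ d : Polynomial ℝ, d ∣ αL → d ∣ αR → d ∣ q)
    -- α̃^(S) = α^(S)/q
    (αtL αtR : Polynomial ℝ) (hαtL : αtL * q = αL) (hαtR : αtR * q = αR) :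
    Gamma0 k τ p r αtL αtR βL βR q =
      SplineSpace k τ p
        (fun i => if (αL * βR - αR * βL).eval (τ i) = 0 then r else r + 1) ∧
    Module.finrank ℝ (Submodule.span ℝ (Gamma0 k τ p r αtL αtR βL βR q)) =
      k * (p - r - 1) + p +
        (Finset.filter (fun i => (αL * βR - αR * βL).eval (τ i) = 0)
          (Finset.Icc 1 k)).card + 1 := by
  have hset : Gamma0 k τ p r αtL αtR βL βR q =
      SplineSpace k τ p
        (fun i => if (αL * βR - αR * βL).eval (τ i) = 0 then r else r + 1) := by
    apply Set.Subset.antisymm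
    · have := gamma_sub p r k τ hτ0 hτ1 hτ βL βR q αtL αtR
      rwa [hαtL, hαtR] at this
    · exact sub_gamma p r k hr2 hrp τ hτ0 hτ1 hτ αL αR βL βR hdαL hdαR hdβL hdβR hsign
        q αtL αtR hαtL hαtR
  refine ⟨hset, ?_⟩
  rw [hset, finrank_spline hτ0 hτ1 hτ p _ (by intro i; split_ifs <;> omega)]
  have : ∀ i ∈ Finset.Icc 1 k,
      p - (if (αL * βR - αR * βL).eval (τ i) = 0 then r else r + 1) =
        (p - r - 1) + (if (αL * βR - αR * βL).eval (τ i) = 0 then 1 else 0) := by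
    intro i _
    split_ifs <;> omega
  rw [Finset.sum_congr rfl this, Finset.sum_add_distrib, Finset.sum_const, Nat.card_Icc,
    Finset.card_filter, smul_eq_mul, Nat.add_sub_cancel]
  ring
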